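/- Let π(x,y) = (2y(y−x+2)/(x−y)², y²/(x−y)²) for x ≠ y, considered over the finite field 𝔽_p = ZMod p for a prime p. There exists N such that for every prime p ≥ N the following are equivalent: (1) there exists (x,y) ∈ 𝔽_p² such that the points z₀ = (x,y), z₁ = π(z₀), z₂ = π(z₁), z₃ = π(z₂) each have distinct coordinates, π(z₃) = z₀, and z₂ ≠ z₀ (i.e., π has a point of period exactly 4 over 𝔽_p); (2) p mod 5 ∈ {1, 4}, or p mod 17 ∈ {1, 4, 13, 16}. -/

import Mathlib

/-- The Pappus–Steiner map `π(x,y) = (2y(y−x+2)/(x−y)², y²/(x−y)²)`. -/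
def pap {k : Type*} [Field k] (z : k × k) : k × k :=
  (2 * z.2 * (z.2 - z.1 + 2) / (z.1 - z.2) ^ 2, z.2 ^ 2 / (z.1 - z.2) ^ 2)

/-- The point of the plane attached to two consecutive terms of the recurrence. -/
def papP {k : Type*} [Field k] (a b : k) : k × k := ((1 + b) / a ^ 2, 1 / a ^ 2)

theorem papP_step {k : Type*} [Field k] {a b c : k} (ha : a ≠ 0) (hb : b ≠ 0)
    (h : c + 2 * b + 1 = 4 * a ^ 2) : pap (papP a b) = papP b c := by
  have hc : c = 4 * a ^ 2 - 2 * b - 1 := by linear_combination h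
  have e : (1 + b) / a ^ 2 - 1 / a ^ 2 = b / a ^ 2 := by ring
  have e' : 1 / a ^ 2 - (1 + b) / a ^ 2 = - b / a ^ 2 := by ring
  subst hc
  simp only [pap, papP, e, e']
  ext
  · simp only
    field_simp
    ring
  · simp only
    field_simp

theorem papP_ne {k : Type*} [Field k] {a b : k} (ha : a ≠ 0) (hb : b ≠ 0) :
    (papP a b).1 ≠ (papP a b).2 := by
  simp only [papP]
  intro h
  field_simp at h
  apply hb
  linear_combination h

theorem pap_zero {k : Type*} [Field k] {z : k × k} (h : z.2 = 0) :
    (pap z).1 = (pap z).2 := by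
  simp [pap, h]

theorem pap_eq_papP {k : Type*} [Field k] (z : k × k) (h : z.1 ≠ z.2) (hy : z.2 ≠ 0)
    (hy' : (pap z).2 ≠ 0) :
    pap z = papP ((z.1 - z.2) / z.2) (((pap z).1 - (pap z).2) / (pap z).2) := by
  have hs : z.1 - z.2 ≠ 0 := sub_ne_zero.2 h
  have h2 : (pap z).2 = 1 / ((z.1 - z.2) / z.2) ^ 2 := by
    simp only [pap]; field_simp
  have h3 : (pap z).1 = (1 + ((pap z).1 - (pap z).2) / (pap z).2) * (pap z).2 := by
    field_simp; ring
  ext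
  · simp only [papP]
    rw [div_eq_mul_one_div (1 + _), ← h2]
    exact h3
  · exact h2

theorem pap_rec {k : Type*} [Field k] {a b c : k} (ha : a ≠ 0) (hb : b ≠ 0)
    (h : pap (papP a b) = papP b c) : c + 2 * b + 1 = 4 * a ^ 2 := by
  have h' := papP_step (c := 4 * a ^ 2 - 2 * b - 1) ha hb (by ring)
  rw [h'] at h
  have := congrArg Prod.fst h
  simp only [papP] at this
  field_simp at this
  linear_combination - this

/-- Backward construction of a period-four point. -/
theorem pap_of_cycle {k : Type*} [Field k] {a b c d : k} (ha : a ≠ 0) (hb : b ≠ 0)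
    (hc : c ≠ 0) (hd : d ≠ 0) (h1 : c + 2 * b + 1 = 4 * a ^ 2) (h2 : d + 2 * c + 1 = 4 * b ^ 2)
    (h3 : a + 2 * d + 1 = 4 * c ^ 2) (h4 : b + 2 * a + 1 = 4 * d ^ 2) (hac : a ≠ c) :
    ∃ x y : k, x ≠ y ∧
          (pap (x, y)).1 ≠ (pap (x, y)).2 ∧
          (pap (pap (x, y))).1 ≠ (pap (pap (x, y))).2 ∧
          (pap (pap (pap (x, y)))).1 ≠ (pap (pap (pap (x, y)))).2 ∧
          pap (pap (pap (pap (x, y)))) = (x, y) ∧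
          pap (pap (x, y)) ≠ (x, y) := by
  refine ⟨(papP d a).1, (papP d a).2, papP_ne hd ha, ?_⟩
  rw [Prod.mk.eta, papP_step hd ha h4, papP_step ha hb h1, papP_step hb hc h2, papP_step hc hd h3]
  refine ⟨papP_ne ha hb, papP_ne hb hc, papP_ne hc hd, rfl, ?_⟩
  intro h
  have e2 := congrArg Prod.snd h
  have e1 := congrArg Prod.fst h
  simp only [papP] at e1 e2
  have e3 : b ^ 2 = d ^ 2 := by
    field_simp at e2
    exact e2.symm
  rw [e3] at e1
  field_simp at e1
  apply hac
  linear_combination -e1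

theorem pap_cycle {k : Type*} [Field k] {z : k × k} (h0 : z.1 ≠ z.2)
    (h1 : (pap z).1 ≠ (pap z).2) (h2 : (pap (pap z)).1 ≠ (pap (pap z)).2)
    (h3 : (pap (pap (pap z))).1 ≠ (pap (pap (pap z))).2)
    (h4 : pap (pap (pap (pap z))) = z) (h5 : pap (pap z) ≠ z) :
    ∃ a b c d : k, c + 2 * b + 1 = 4 * a ^ 2 ∧ d + 2 * c + 1 = 4 * b ^ 2 ∧
      a + 2 * d + 1 = 4 * c ^ 2 ∧ b + 2 * a + 1 = 4 * d ^ 2 ∧ ¬ (a = c ∧ b = d) := by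
  have y0 : z.2 ≠ 0 := fun h => h1 (pap_zero h)
  have y1 : (pap z).2 ≠ 0 := fun h => h2 (pap_zero h)
  have y2 : (pap (pap z)).2 ≠ 0 := fun h => h3 (pap_zero h)
  have y3 : (pap (pap (pap z))).2 ≠ 0 := fun h => h0 (by have := pap_zero h; rwa [h4] at this)
  have e0 := pap_eq_papP z h0 y0 y1
  have e1 := pap_eq_papP _ h1 y1 y2
  have e2 := pap_eq_papP _ h2 y2 y3
  have e3 := pap_eq_papP _ h3 y3 (by rwa [h4])
  rw [h4] at e3
  have nz : ∀ w : k × k, w.1 ≠ w.2 → w.2 ≠ 0 → (w.1 - w.2) / w.2 ≠ 0 := fun w h h' =>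
    div_ne_zero (sub_ne_zero.2 h) h'
  have a0 := nz _ h0 y0
  have a1 := nz _ h1 y1
  have a2 := nz _ h2 y2
  have a3 := nz _ h3 y3
  obtain ⟨a, ha⟩ : ∃ a, a = (z.1 - z.2) / z.2 := ⟨_, rfl⟩
  obtain ⟨b, hb⟩ : ∃ b, b = ((pap z).1 - (pap z).2) / (pap z).2 := ⟨_, rfl⟩
  obtain ⟨c, hc⟩ : ∃ c, c = ((pap (pap z)).1 - (pap (pap z)).2) / (pap (pap z)).2 := ⟨_, rfl⟩
  obtain ⟨d, hd⟩ : ∃ d, d = ((pap (pap (pap z))).1 - (pap (pap (pap z))).2) /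
    (pap (pap (pap z))).2 := ⟨_, rfl⟩
  rw [← ha] at a0
  rw [← hb] at a1
  rw [← hc] at a2
  rw [← hd] at a3
  rw [← ha, ← hb] at e0
  rw [← hb, ← hc] at e1
  rw [← hc, ← hd] at e2
  rw [← hd, ← ha] at e3
  have q0 : pap (papP d a) = papP a b := e3 ▸ e0
  have q1 : pap (papP a b) = papP b c := e0 ▸ e1
  have q2 : pap (papP b c) = papP c d := e1 ▸ e2
  have q3 : pap (papP c d) = papP d a := by rw [← e2, h4]; exact e3
  refine ⟨a, b, c, d, pap_rec a0 a1 q1, pap_rec a1 a2 q2, pap_rec a2 a3 q3,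
    pap_rec a3 a0 q0, ?_⟩
  rintro ⟨hac, hbd⟩
  apply h5
  rw [e1, hbd, ← hac]
  exact e3.symm

theorem cycle_alg {k : Type*} [Field k] (two : (2 : k) ≠ 0) {a b c d : k}
    (h1 : c + 2 * b + 1 = 4 * a ^ 2) (h2 : d + 2 * c + 1 = 4 * b ^ 2)
    (h3 : a + 2 * d + 1 = 4 * c ^ 2) (h4 : b + 2 * a + 1 = 4 * d ^ 2) (hne : ¬ (a = c ∧ b = d)) :
    (∃ r : k, r ^ 2 = 5) ∨ ∃ x : k, x ^ 4 - 17 * x ^ 2 + 68 = 0 := by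
  obtain ⟨A, hA⟩ : ∃ A, A = 4 * (a + c) + 1 := ⟨_, rfl⟩
  obtain ⟨B, hB⟩ : ∃ B, B = 4 * (b + d) + 1 := ⟨_, rfl⟩
  obtain ⟨u, hu⟩ : ∃ u, u = a - c := ⟨_, rfl⟩
  obtain ⟨v, hv⟩ : ∃ v, v = b - d := ⟨_, rfl⟩
  have r1 : A * u = 2 * v := by subst_vars; linear_combination h3 - h1
  have r2 : B * v = - 2 * u := by subst_vars; linear_combination h4 - h2
  have hu0 : u ≠ 0 := by
    intro h
    have hv0 : v = 0 := by
      rw [h, mul_zero] at r1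
      exact (mul_eq_zero.1 r1.symm).resolve_left two
    exact hne ⟨sub_eq_zero.1 (hu ▸ h), sub_eq_zero.1 (hv ▸ hv0)⟩
  have AB : A * B = -4 := by
    apply mul_right_cancel₀ hu0
    linear_combination B * r1 + 2 * r2
  have s1 : 16 * u ^ 2 = 4 * A + 4 * B + 9 - A ^ 2 := by
    subst_vars; linear_combination -8 * (h1 + h3)
  have s2 : 16 * v ^ 2 = 4 * A + 4 * B + 9 - B ^ 2 := by
    subst_vars; linear_combination -8 * (h2 + h4)
  have hA0 : A ≠ 0 := by
    rintro rfl
    apply two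
    have : (2:k) * 2 = 0 := by linear_combination AB
    simpa using this
  have key : A * ((A + B) * ((A + B - 1) * (A + B - 3))) = 0 := by
    have t : 4 * (4 * A + 4 * B + 9 - B ^ 2) = A ^ 2 * (4 * A + 4 * B + 9 - A ^ 2) := by
      rw [← s1, ← s2]; linear_combination (-16) * (A * u + 2 * v) * r1
    linear_combination t + (3 * A ^ 2 + 3 * (A * B - 4) + B ^ 2 - 4 * A - 4 * B + 3) * AB
  have four : (4 : k) ≠ 0 := by
    intro h; apply two
    have : (2:k) * 2 = 0 := by linear_combination h
    simpa using this
  rcases mul_eq_zero.1 ((mul_eq_zero.1 key).resolve_left hA0) with E | E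
  · left
    have : B = -A := by linear_combination E
    subst this
    exact ⟨4 * u, by linear_combination s1 + AB⟩
  rcases mul_eq_zero.1 E with E | E
  · right
    have : B = 1 - A := by linear_combination E
    subst this
    have h9 : (4 * u) ^ 2 = 9 - A := by linear_combination s1 + AB
    refine ⟨4 * u, ?_⟩
    have : (4 * u) ^ 4 = (9 - A) ^ 2 := by rw [← h9]; ring
    rw [this, h9]
    linear_combination -AB
  · left
    have : B = 3 - A := by linear_combination E
    subst this
    have : (A - 4) * (A + 1) = 0 := by linear_combination -AB
    rcases mul_eq_zero.1 this with h | h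
    · exact ⟨4 * u, by linear_combination s1 - (A + 4) * h⟩
    · refine ⟨2 * u, ?_⟩
      apply mul_left_cancel₀ four
      linear_combination s1 - (A - 1) * h

theorem exists_of_sqrt5 {k : Type*} [Field k] (two : (2 : k) ≠ 0) (five : (5 : k) ≠ 0)
    {r : k} (hr : r ^ 2 = 5) :
    ∃ a b c d : k, a ≠ 0 ∧ b ≠ 0 ∧ c ≠ 0 ∧ d ≠ 0 ∧ c + 2 * b + 1 = 4 * a ^ 2 ∧
      d + 2 * c + 1 = 4 * b ^ 2 ∧
      a + 2 * d + 1 = 4 * c ^ 2 ∧ b + 2 * a + 1 = 4 * d ^ 2 ∧ a ≠ c := by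
  have hr0 : r ≠ 0 := by rintro rfl; apply five; rw [← hr]; ring
  have four : (4 : k) ≠ 0 := by
    have : (4 : k) = 2 * 2 := by norm_num
    rw [this]; exact mul_ne_zero two two
  have eight : (8 : k) ≠ 0 := by
    have : (8 : k) = 2 * 4 := by norm_num
    rw [this]; exact mul_ne_zero two four
  refine ⟨(1 + r) / 8, (-3 + r) / 8, (1 - r) / 8, (-3 - r) / 8,
    div_ne_zero ?_ eight, div_ne_zero ?_ eight, div_ne_zero ?_ eight, div_ne_zero ?_ eight,
    ?_, ?_, ?_, ?_, ?_⟩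
  · intro h; apply four; linear_combination (r - 1) * h - hr
  · intro h; apply four; linear_combination (-3 - r) * h + hr
  · intro h; apply four; linear_combination -(r + 1) * h - hr
  · intro h; apply four; linear_combination (r - 3) * h + hr
  · field_simp; grind
  · field_simp; grind
  · field_simp; grind
  · field_simp; grind
  · intro h
    field_simp at h
    have : 2 * r = 0 := by linear_combination h
    exact (mul_ne_zero two hr0) this

theorem exists_of_quartic {k : Type*} [Field k] (two : (2 : k) ≠ 0) (h17 : (17 : k) ≠ 0)
    {x : k} (hx : x ^ 4 - 17 * x ^ 2 + 68 = 0) :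
    ∃ a b c d : k, a ≠ 0 ∧ b ≠ 0 ∧ c ≠ 0 ∧ d ≠ 0 ∧ c + 2 * b + 1 = 4 * a ^ 2 ∧
      d + 2 * c + 1 = 4 * b ^ 2 ∧
      a + 2 * d + 1 = 4 * c ^ 2 ∧ b + 2 * a + 1 = 4 * d ^ 2 ∧ a ≠ c := by
  have four : (4 : k) ≠ 0 := by
    have : (4 : k) = 2 * 2 := by norm_num
    rw [this]; exact mul_ne_zero two two
  have eight : (8 : k) ≠ 0 := by
    have : (8 : k) = 2 * 4 := by norm_num
    rw [this]; exact mul_ne_zero two four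
  have sixteen : (16 : k) ≠ 0 := by
    have : (16 : k) = 2 * 8 := by norm_num
    rw [this]; exact mul_ne_zero two eight
  have hx0 : x ≠ 0 := by
    rintro rfl
    apply mul_ne_zero four h17
    linear_combination hx
  obtain ⟨A, hA⟩ : ∃ A, A = 9 - x ^ 2 := ⟨_, rfl⟩
  have hA2 : A ^ 2 = A + 4 := by subst hA; linear_combination hx
  have hx2 : x ^ 2 = 9 - A := by linear_combination hA
  have hA0 : A ≠ 0 := by
    rintro rfl
    apply four
    linear_combination -hA2
  have hm : 2 - x ≠ 0 := by
    intro h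
    apply sixteen
    have : A = 5 := by linear_combination hA + (x + 2) * h
    subst this; linear_combination hA2
  have hp : 2 + x ≠ 0 := by
    intro h
    apply sixteen
    have : A = 5 := by linear_combination hA + (2 - x) * h
    subst this; linear_combination hA2
  refine ⟨(A - 1 + x) / 8, (-(A * (2 - x))) / 16, (A - 1 - x) / 8, (-(A * (2 + x))) / 16,
    div_ne_zero ?_ eight, div_ne_zero (neg_ne_zero.2 (mul_ne_zero hA0 hm)) sixteen,
    div_ne_zero ?_ eight, div_ne_zero (neg_ne_zero.2 (mul_ne_zero hA0 hp)) sixteen,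
    ?_, ?_, ?_, ?_, ?_⟩
  · intro h; apply four; linear_combination -(A - 1 - x) * h - hx2 + hA2
  · intro h; apply four; linear_combination -(A - 1 + x) * h - hx2 + hA2
  · field_simp; clear hA hx; grind
  · field_simp; clear hA hx; grind
  · field_simp; clear hA hx; grind
  · field_simp; clear hA hx; grind
  · intro h
    field_simp at h
    have : 2 * x = 0 := by linear_combination h
    exact (mul_ne_zero two hx0) this

theorem sq_mod_five : ∀ r : ℕ, r < 5 → r ≠ 0 → (IsSquare (r : ZMod 5) ↔ (r = 1 ∨ r = 4)) := by
  decide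

theorem sqrt5_iff (p : ℕ) [Fact p.Prime] (hp : 100 ≤ p) :
    (∃ r : ZMod p, r ^ 2 = 5) ↔ (p % 5 = 1 ∨ p % 5 = 4) := by
  haveI : Fact (Nat.Prime 5) := ⟨by norm_num⟩
  have h := ZMod.exists_sq_eq_prime_iff_of_mod_four_eq_one (p := 5) (q := p) (by norm_num)
    (by omega)
  have h' : (∃ r : ZMod p, r ^ 2 = 5) ↔ IsSquare ((5 : ℕ) : ZMod p) := by
    constructor
    · rintro ⟨r, hr⟩; exact ⟨r, by push_cast; rw [← hr]; ring⟩
    · rintro ⟨r, hr⟩; exact ⟨r, by push_cast at hr; rw [hr]; ring⟩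
  rw [h', ← h]
  have hp0 : p % 5 ≠ 0 := by
    intro h0
    have := (Nat.prime_dvd_prime_iff_eq (by norm_num) (Fact.out : p.Prime)).1
      (Nat.dvd_of_mod_eq_zero h0)
    omega
  rw [← ZMod.natCast_mod p 5]
  exact sq_mod_five _ (Nat.mod_lt _ (by norm_num)) hp0

/-- Difference of two quartic Gaussian periods. -/
def gw0 {k : Type*} [CommRing k] (z : k) : k :=
  z + z ^ 4 + z ^ 13 + z ^ 16 - (z ^ 2 + z ^ 8 + z ^ 9 + z ^ 15)

/-- The other difference of two quartic Gaussian periods. -/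
def gw1 {k : Type*} [CommRing k] (z : k) : k :=
  z ^ 3 + z ^ 12 + z ^ 5 + z ^ 14 - (z ^ 6 + z ^ 7 + z ^ 10 + z ^ 11)

theorem gw_sq {k : Type*} [CommRing k] {z : k} (hz : ∑ i ∈ Finset.range 17, z ^ i = 0) :
    ∃ e : k, e ^ 2 + e - 4 = 0 ∧ gw0 z ^ 2 = 8 - e ∧ gw1 z ^ 2 = 9 + e := by
  simp only [Finset.sum_range_succ, Finset.sum_range_zero] at hz
  refine ⟨z + z ^ 4 + z ^ 13 + z ^ 16 + (z ^ 2 + z ^ 8 + z ^ 9 + z ^ 15), ?_, ?_, ?_⟩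
  · linear_combination ((-4)*z^0 + (5)*z^1 + (1)*z^2 + (-2)*z^7 + (2)*z^8 + (1)*z^9 + (1)*z^10 + (-2)*z^11 + (1)*z^13 + (-1)*z^14 + (1)*z^15 + (1)*z^16) * hz
  · unfold gw0
    linear_combination ((-8)*z^0 + (9)*z^1 + (1)*z^2 + (-4)*z^3 + (4)*z^4 + (-4)*z^6 + (2)*z^7 + (2)*z^8 + (-3)*z^9 + (1)*z^10 + (2)*z^11 + (-4)*z^12 + (1)*z^13 + (3)*z^14 + (-3)*z^15 + (1)*z^16) * hz
  · unfold gw1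
    linear_combination ((-9)*z^0 + (8)*z^1 + (1)*z^3 + (-1)*z^4 + (1)*z^5 + (1)*z^6 + (-1)*z^7 + (1)*z^8 + (-4)*z^9 + (2)*z^10 + (-1)*z^11 + (1)*z^12) * hz

theorem gw_three {k : Type*} [CommRing k] {z : k} (hz : z ^ 17 = 1) :
    gw0 (z ^ 3) = gw1 z ∧ gw1 (z ^ 3) = - gw0 z := by
  have h : ∀ n, z ^ n = z ^ (n % 17) := fun n => pow_eq_pow_mod n hz
  constructor
  · simp only [gw0, gw1, ← pow_mul]
    rw [h (3 * 13), h (3 * 16), h (3 * 8), h (3 * 9), h (3 * 15)]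
  · simp only [gw0, gw1, ← pow_mul]
    rw [h (3 * 12), h (3 * 14), h (3 * 6), h (3 * 7), h (3 * 10), h (3 * 11)]
    norm_num <;> ring

theorem gw_pow {k : Type*} [CommRing k] {z : k} (hz : z ^ 17 = 1) (n : ℕ) :
    (gw0 (z ^ 3 ^ (4 * n)) = gw0 z ∧ gw1 (z ^ 3 ^ (4 * n)) = gw1 z) ∧
    (gw0 (z ^ 3 ^ (4 * n + 1)) = gw1 z ∧ gw1 (z ^ 3 ^ (4 * n + 1)) = - gw0 z) ∧
    (gw0 (z ^ 3 ^ (4 * n + 2)) = - gw0 z ∧ gw1 (z ^ 3 ^ (4 * n + 2)) = - gw1 z) ∧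
    (gw0 (z ^ 3 ^ (4 * n + 3)) = - gw1 z ∧ gw1 (z ^ 3 ^ (4 * n + 3)) = gw0 z) := by
  have step : ∀ m, gw0 (z ^ 3 ^ (m + 1)) = gw1 (z ^ 3 ^ m) ∧
      gw1 (z ^ 3 ^ (m + 1)) = - gw0 (z ^ 3 ^ m) := by
    intro m
    rw [pow_succ, pow_mul]
    exact gw_three (by rw [← pow_mul, mul_comm, pow_mul, hz, one_pow])
  have base : ∀ n, gw0 (z ^ 3 ^ (4 * n)) = gw0 z ∧ gw1 (z ^ 3 ^ (4 * n)) = gw1 z := by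
    intro n
    induction n with
    | zero => simp
    | succ n ih =>
      rw [show 4 * (n + 1) = 4 * n + 1 + 1 + 1 + 1 by ring]
      simp [(step _).1, (step _).2, ih.1, ih.2]
  refine ⟨base n, ?_, ?_, ?_⟩
  · simp [(step _).1, (step _).2, (base n).1, (base n).2]
  · simp [(step _).1, (step _).2, (base n).1, (base n).2]
  · simp [(step _).1, (step _).2, (base n).1, (base n).2]

theorem gw_frob {k : Type*} [CommRing k] {z : k} (hz : z ^ 17 = 1) (p : ℕ) (hp : p % 17 ≠ 0) :
    ((p % 17 = 1 ∨ p % 17 = 4 ∨ p % 17 = 13 ∨ p % 17 = 16) ∧ gw0 (z ^ p) = gw0 z) ∨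
    (¬ (p % 17 = 1 ∨ p % 17 = 4 ∨ p % 17 = 13 ∨ p % 17 = 16) ∧
      ((gw0 (z ^ p) = gw1 z ∧ gw1 (z ^ p) = - gw0 z) ∨
       (gw0 (z ^ p) = - gw0 z ∧ gw1 (z ^ p) = - gw1 z) ∨
       (gw0 (z ^ p) = - gw1 z ∧ gw1 (z ^ p) = gw0 z))) := by
  have hlt : p % 17 < 17 := Nat.mod_lt _ (by norm_num)
  have h : ∀ m n, m % 17 = n % 17 → z ^ m = z ^ n := fun m n hmn => by
    rw [pow_eq_pow_mod m hz, pow_eq_pow_mod n hz, hmn]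
  have ex : ∃ n, n < 4 ∧ (p % 17 = 3 ^ (4 * n) % 17 ∨ p % 17 = 3 ^ (4 * n + 1) % 17 ∨
      p % 17 = 3 ^ (4 * n + 2) % 17 ∨ p % 17 = 3 ^ (4 * n + 3) % 17) := by
    generalize p % 17 = r at *
    interval_cases r <;> first | contradiction | decide
  obtain ⟨n, hn, hr⟩ := ex
  obtain ⟨g0, g1, g2, g3⟩ := gw_pow hz n
  rcases hr with hr | hr | hr | hr <;> rw [h _ _ hr]
  · exact Or.inl ⟨by rw [hr]; interval_cases n <;> decide, g0.1⟩
  · exact Or.inr ⟨by rw [hr]; interval_cases n <;> decide, Or.inl g1⟩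
  · exact Or.inr ⟨by rw [hr]; interval_cases n <;> decide, Or.inr (Or.inl g2)⟩
  · exact Or.inr ⟨by rw [hr]; interval_cases n <;> decide, Or.inr (Or.inr g3)⟩

theorem exists_zeta (K : Type*) [Field K] [IsAlgClosed K] :
    ∃ z : K, ∑ i ∈ Finset.range 17, z ^ i = 0 := by
  obtain ⟨z, hz⟩ := IsAlgClosed.exists_root (Polynomial.cyclotomic 17 K) (by
    rw [Polynomial.degree_cyclotomic]; decide)
  haveI : Fact (Nat.Prime 17) := ⟨by norm_num⟩
  refine ⟨z, ?_⟩
  rw [Polynomial.cyclotomic_prime, Polynomial.IsRoot.def, Polynomial.eval_finsetSum] at hz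
  simpa using hz

theorem natCast_ne (p : ℕ) [Fact p.Prime] (hp : 100 ≤ p) (n : ℕ) (h0 : 0 < n) (hn : n < 100) :
    ((n : ℕ) : ZMod p) ≠ 0 := by
  rw [Ne, ZMod.natCast_eq_zero_iff]
  intro h
  have := Nat.le_of_dvd h0 h
  omega

theorem quartic_iff (p : ℕ) [Fact p.Prime] (hp : 100 ≤ p) :
    (∃ x : ZMod p, x ^ 4 - 17 * x ^ 2 + 68 = 0) ↔
      (p % 17 = 1 ∨ p % 17 = 4 ∨ p % 17 = 13 ∨ p % 17 = 16) := by
  let K := AlgebraicClosure (ZMod p)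
  haveI : CharP K p := charP_of_injective_algebraMap (algebraMap (ZMod p) K).injective p
  have hp0 : p % 17 ≠ 0 := by
    intro h0
    have := (Nat.prime_dvd_prime_iff_eq (by norm_num) (Fact.out : p.Prime)).1
      (Nat.dvd_of_mod_eq_zero h0)
    omega
  obtain ⟨z, hz⟩ := exists_zeta K
  have hz17 : z ^ 17 = 1 := by
    have := geom_sum_mul z 17
    rw [hz, zero_mul] at this
    linear_combination -this
  obtain ⟨e, he, hw0, hw1⟩ := gw_sq hz
  have hfac : ∀ x : K, x ^ 4 - 17 * x ^ 2 + 68 = (x ^ 2 - gw0 z ^ 2) * (x ^ 2 - gw1 z ^ 2) := by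
    intro x; rw [hw0, hw1]; linear_combination he
  have f0 : gw0 z ^ p = gw0 (z ^ p) := by
    have : frobenius K p (gw0 z) = gw0 (frobenius K p z) := by simp [gw0]
    simpa [frobenius_def] using this
  have f1 : gw1 z ^ p = gw1 (z ^ p) := by
    have : frobenius K p (gw1 z) = gw1 (frobenius K p z) := by simp [gw1]
    simpa [frobenius_def] using this
  have n17 : (17 : K) ≠ 0 := by
    have := (map_ne_zero (algebraMap (ZMod p) K)).2 (natCast_ne p hp 17 (by norm_num) (by norm_num))
    rw [map_natCast] at this
    exact_mod_cast this
  have m17 : algebraMap (ZMod p) K 17 = 17 := map_ofNat _ 17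
  have m68 : algebraMap (ZMod p) K 68 = 68 := map_ofNat _ 68
  have n2 : (2 : K) ≠ 0 := by
    have := (map_ne_zero (algebraMap (ZMod p) K)).2 (natCast_ne p hp 2 (by norm_num) (by norm_num))
    rw [map_natCast] at this
    exact_mod_cast this
  have n68 : (68 : K) ≠ 0 := by
    have := (map_ne_zero (algebraMap (ZMod p) K)).2 (natCast_ne p hp 68 (by norm_num) (by norm_num))
    rw [map_natCast] at this
    exact_mod_cast this
  rcases gw_frob hz17 p hp0 with ⟨hr, hg⟩ | ⟨hr, hg⟩
  · refine ⟨fun _ => hr, fun _ => ?_⟩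
    have hmem : gw0 z ∈ (⊥ : Subfield K) := by
      rw [Subfield.mem_bot_iff_pow_eq_self K p, f0, hg]
    have hle : (⊥ : Subfield K) ≤ (algebraMap (ZMod p) K).fieldRange := bot_le
    obtain ⟨x, hx⟩ := hle hmem
    refine ⟨x, (algebraMap (ZMod p) K).injective ?_⟩
    have := hfac (gw0 z)
    rw [sub_self, zero_mul, ← hx] at this
    simpa [m17, m68] using this
  · refine ⟨?_, fun h => absurd h hr⟩
    rintro ⟨x, hx⟩
    exfalso
    have hx' : (algebraMap (ZMod p) K x) ^ 4 - 17 * (algebraMap (ZMod p) K x) ^ 2 + 68 = 0 := by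
      have := congrArg (algebraMap (ZMod p) K) hx
      simpa [m17, m68] using this
    have hxp : (algebraMap (ZMod p) K x) ^ p = algebraMap (ZMod p) K x := by
      rw [← map_pow, ZMod.pow_card]
    generalize algebraMap (ZMod p) K x = X at *
    have hX0 : X ≠ 0 := by
      rintro rfl; apply n68; linear_combination hx'
    have hne : gw0 z ^ 2 ≠ gw1 z ^ 2 := by
      intro h; rw [hw0, hw1] at h
      apply n17
      linear_combination -4 * he - (1 + 2 * e) * h
    have odd : Odd p := (Fact.out : p.Prime).odd_of_ne_two (by omega)
    have hneg : ∀ y : K, (-y) ^ p = - y ^ p := fun y => odd.neg_pow y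
    have hxx : (X = gw0 z ∨ X = - gw0 z) ∨ (X = gw1 z ∨ X = - gw1 z) := by
      rw [hfac] at hx'
      rcases mul_eq_zero.1 hx' with h | h
      · exact Or.inl (sq_eq_sq_iff_eq_or_eq_neg.1 (sub_eq_zero.1 h))
      · exact Or.inr (sq_eq_sq_iff_eq_or_eq_neg.1 (sub_eq_zero.1 h))
    rw [← f0, ← f1] at hg
    have hself : X ≠ - X := by
      intro h
      apply mul_ne_zero n2 hX0
      linear_combination h
    have hnw := hneg (gw0 z)
    have hnw' := hneg (gw1 z)
    clear hw0 hw1 he hfac f0 f1 hz hx'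
    rcases hg with ⟨a, b⟩ | ⟨a, b⟩ | ⟨a, b⟩ <;> rcases hxx with (rfl | rfl) | (rfl | rfl) <;> grind

/-- For all sufficiently large primes `p`, the Pappus–Steiner map has a point of period
exactly `4` over `𝔽_p` if and only if `p ≡ 1, 4 (mod 5)` or `p ≡ 1, 4, 13, 16 (mod 17)`. -/
theorem pap_period_four_mod_condition :
    ∃ N : ℕ, ∀ p : ℕ, N ≤ p → (hp : p.Prime) →
      haveI : Fact p.Prime := ⟨hp⟩
      ((∃ x y : ZMod p,
          x ≠ y ∧
          (pap (x, y)).1 ≠ (pap (x, y)).2 ∧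
          (pap (pap (x, y))).1 ≠ (pap (pap (x, y))).2 ∧
          (pap (pap (pap (x, y)))).1 ≠ (pap (pap (pap (x, y)))).2 ∧
          pap (pap (pap (pap (x, y)))) = (x, y) ∧
          pap (pap (x, y)) ≠ (x, y)) ↔
        (p % 5 = 1 ∨ p % 5 = 4 ∨ p % 17 = 1 ∨ p % 17 = 4 ∨ p % 17 = 13 ∨ p % 17 = 16)) := by
  refine ⟨100, fun p hp100 hp => ?_⟩
  haveI : Fact p.Prime := ⟨hp⟩
  have two : (2 : ZMod p) ≠ 0 := by
    simpa using natCast_ne p hp100 2 (by norm_num) (by norm_num)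
  have five : (5 : ZMod p) ≠ 0 := by
    simpa using natCast_ne p hp100 5 (by norm_num) (by norm_num)
  have h17 : (17 : ZMod p) ≠ 0 := by
    simpa using natCast_ne p hp100 17 (by norm_num) (by norm_num)
  rw [← or_assoc, ← sqrt5_iff p hp100, ← quartic_iff p hp100]
  constructor
  · rintro ⟨x, y, h0, h1, h2, h3, h4, h5⟩
    obtain ⟨a, b, c, d, r1, r2, r3, r4, hne⟩ := pap_cycle (z := (x, y)) h0 h1 h2 h3 h4 h5
    exact cycle_alg two r1 r2 r3 r4 hne
  · rintro (⟨r, hr⟩ | ⟨x, hx⟩)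
    · obtain ⟨a, b, c, d, ha, hb, hc, hd, r1, r2, r3, r4, hne⟩ := exists_of_sqrt5 two five hr
      exact pap_of_cycle ha hb hc hd r1 r2 r3 r4 hne
    · obtain ⟨a, b, c, d, ha, hb, hc, hd, r1, r2, r3, r4, hne⟩ := exists_of_quartic two h17 hx
      exact pap_of_cycle ha hb hc hd r1 r2 r3 r4 hne
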